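/- arXiv:math-ph/0309065 — 2 statements merged into one kernel-verified Lean document; each statement's English description precedes it below -/
import Mathlib

section
/- Fix a > 1, let R ∈ (0, e^{a−1}) and let k ≥ 1 be an integer. Then for every smooth u : (0,∞) → ℝ with compact support contained in (0,R), ∫₀^R r² |u'(r)|² dr ≥ (1/4) ∫₀^R ( 1 + Σ_{j=1}^{k} X₁(r)² ⋯ X_j(r)² ) |u(r)|² dr. -/
/-!
Write `S = ∑_{j=1}^k π_j` and `Q = ∑_{j=1}^k π_j²`, where `π_j = X₁ ⋯ X_j`. Since
`r X_j' = X_j π_j`, one gets `r π_j' = π_j ∑_{i ≤ j} π_i`, and hence the Riccati-type identity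
`r S' = (S² + Q) / 2` (`hasDerivAt_sumX`).

Completing the square with `c = (1 + S) / 2` then gives, pointwise on `(0, R)`,
`r² u'² - (1 + Q) u² / 4 = (r u' + c u)² - (c r u²)'`.
As `u` has compact support in `(0, R)`, the total derivative integrates to zero and the remaining
term is nonnegative.
-/

open MeasureTheory Real Filter Set

noncomputable section

abbrev E3 := EuclideanSpace ℝ (Fin 3)

/-- `i`-th partial derivative of a spinor field. -/
def pd (i : Fin 3) (φ : E3 → ℂ × ℂ) (x : E3) : ℂ × ℂ :=
  fderiv ℝ φ x (EuclideanSpace.single i 1)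

/-- The operator `σ·∇` built from the Pauli matrices. -/
def sigmaGrad (φ : E3 → ℂ × ℂ) (x : E3) : ℂ × ℂ :=
  ((pd 2 φ x).1 + (pd 0 φ x).2 - Complex.I * (pd 1 φ x).2,
   (pd 0 φ x).1 + Complex.I * (pd 1 φ x).1 - (pd 2 φ x).2)

/-- Squared norm of a two-spinor value. -/
def nsq (p : ℂ × ℂ) : ℝ := ‖p.1‖ ^ 2 + ‖p.2‖ ^ 2

/-- Pauli matrix `σ₁` acting on `ℂ²`. -/
def pauli1 (p : ℂ × ℂ) : ℂ × ℂ := (p.2, p.1)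

/-- Pauli matrix `σ₂` acting on `ℂ²`. -/
def pauli2 (p : ℂ × ℂ) : ℂ × ℂ := (-(Complex.I * p.2), Complex.I * p.1)

/-- Pauli matrix `σ₃` acting on `ℂ²`. -/
def pauli3 (p : ℂ × ℂ) : ℂ × ℂ := (p.1, -p.2)

/-- The spin-orbit operator `σ·L`. -/
def sigmaL (φ : E3 → ℂ × ℂ) (x : E3) : ℂ × ℂ :=
  (-Complex.I) •
    (pauli1 ((x 1 : ℂ) • pd 2 φ x - (x 2 : ℂ) • pd 1 φ x) +
     pauli2 ((x 2 : ℂ) • pd 0 φ x - (x 0 : ℂ) • pd 2 φ x) +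
     pauli3 ((x 0 : ℂ) • pd 1 φ x - (x 1 : ℂ) • pd 0 φ x))

/-- `σ·x = σ₁x₁ + σ₂x₂ + σ₃x₃` acting on a spinor value. -/
def sigmaDotX (x : E3) (p : ℂ × ℂ) : ℂ × ℂ :=
  ((x 2 : ℂ) * p.1 + ((x 0 : ℂ) - Complex.I * (x 1 : ℂ)) * p.2,
   ((x 0 : ℂ) + Complex.I * (x 1 : ℂ)) * p.1 - (x 2 : ℂ) * p.2)

/-- Inequality (R8) for a weight `W`, a radius `R` and a constant `C`. -/
def IneqR8 (W : ℝ → ℝ) (R C : ℝ) : Prop :=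
  ∀ φ : E3 → ℂ × ℂ, ContDiff ℝ (⊤ : ℕ∞) φ → HasCompactSupport φ →
    (∫ x : E3, (W ‖x‖ / ‖x‖) * nsq (φ x)) +
        C * (∫ x in Metric.sphere (0 : E3) R, nsq (φ x) ∂μH[2]) ≤
      ∫ x : E3, (nsq (sigmaGrad φ x) / (1 + W ‖x‖ / ‖x‖) + nsq (φ x))

/-- Iterated logarithmic functions: `Xk a 1 = (a - log s)⁻¹`, `Xk a (k+1) = X₁ ∘ Xk a k`. -/
def Xk (a : ℝ) : ℕ → ℝ → ℝ
  | 0, s => s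
  | k + 1, s => (a - Real.log (Xk a k s))⁻¹

/-- `π_j(s) = X₁(s)⋯X_j(s)`. -/
def piX (a : ℝ) (j : ℕ) (s : ℝ) : ℝ := ∏ i ∈ Finset.Icc 1 j, Xk a i s

/-- `Σ_{j=1}^k X₁(s)²⋯X_j(s)²`. -/
def sumX2 (a : ℝ) (k : ℕ) (s : ℝ) : ℝ := ∑ j ∈ Finset.Icc 1 k, (piX a j s) ^ 2

/-- The sum `∑_{j=1}^k X₁ ⋯ X_j`, denoted `S` above. -/
def sumX (a : ℝ) (k : ℕ) (s : ℝ) : ℝ := ∑ j ∈ Finset.Icc 1 k, piX a j s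

/-- The bound on the logarithm is what keeps the next denominator `a - log (Xk a k s)` above `1`;
it is propagated because `X_{k+1} < 1` and `a > 1`. -/
lemma Xk_pos_log_lt {a : ℝ} (ha : 1 < a) {s : ℝ} (hs : s ∈ Set.Ioo 0 (Real.exp (a - 1))) (k : ℕ) :
    0 < Xk a k s ∧ Real.log (Xk a k s) < a - 1 := by
  induction k with
  | zero => exact ⟨hs.1, (Real.log_lt_iff_lt_exp hs.1).2 hs.2⟩
  | succ k ih =>
    have h1 : 1 < a - Real.log (Xk a k s) := by linarith [ih.2]
    have h2 : 0 < (a - Real.log (Xk a k s))⁻¹ := by positivity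
    refine ⟨h2, ?_⟩
    have h3 := Real.log_neg h2 (inv_lt_one_of_one_lt₀ h1)
    change Real.log (a - Real.log (Xk a k s))⁻¹ < a - 1
    linarith

lemma piX_succ (a : ℝ) (k : ℕ) (s : ℝ) : piX a (k + 1) s = piX a k s * Xk a (k + 1) s := by
  simp [piX, Finset.prod_Icc_succ_top]

lemma sumX_succ (a : ℝ) (k : ℕ) (s : ℝ) : sumX a (k + 1) s = sumX a k s + piX a (k + 1) s := by
  simp [sumX, Finset.sum_Icc_succ_top]

lemma sumX2_succ (a : ℝ) (k : ℕ) (s : ℝ) :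
    sumX2 a (k + 1) s = sumX2 a k s + piX a (k + 1) s ^ 2 := by
  simp [sumX2, Finset.sum_Icc_succ_top]

lemma hasDerivAt_Xk {a : ℝ} (ha : 1 < a) {s : ℝ} (hs : s ∈ Set.Ioo 0 (Real.exp (a - 1))) (k : ℕ) :
    HasDerivAt (Xk a k) (Xk a k s * piX a k s / s) s := by
  have hs0 : s ≠ 0 := hs.1.ne'
  induction k with
  | zero =>
    have h : Xk a 0 s * piX a 0 s / s = 1 := by simp [Xk, piX, hs0]
    rw [h]
    exact hasDerivAt_id s
  | succ k ih =>
    obtain ⟨hp, hl⟩ := Xk_pos_log_lt ha hs k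
    have hd : a - Real.log (Xk a k s) ≠ 0 := by linarith
    have h := ((ih.log hp.ne').const_sub a).inv hd
    refine h.congr_deriv ?_
    rw [piX_succ]
    simp only [Xk]
    have := hp.ne'
    field_simp

lemma hasDerivAt_piX {a : ℝ} (ha : 1 < a) {s : ℝ} (hs : s ∈ Set.Ioo 0 (Real.exp (a - 1)))
    (k : ℕ) : HasDerivAt (piX a k) (piX a k s * sumX a k s / s) s := by
  induction k with
  | zero =>
    have h : piX a 0 = fun _ => 1 := by ext; simp [piX]
    rw [h]
    simpa [sumX] using hasDerivAt_const s (1 : ℝ)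
  | succ k ih =>
    have h : piX a (k + 1) = fun t => piX a k t * Xk a (k + 1) t := funext (piX_succ a k)
    have h2 := ih.mul (hasDerivAt_Xk ha hs (k + 1))
    rw [sumX_succ, h]
    refine h2.congr_deriv ?_
    rw [piX_succ]
    ring

/-- The identity `s S' = (S² + Q) / 2`: the double sum `∑_{i ≤ j} π_i π_j` is half of the square of
the sum plus half of the diagonal. -/
lemma hasDerivAt_sumX {a : ℝ} (ha : 1 < a) {s : ℝ} (hs : s ∈ Set.Ioo 0 (Real.exp (a - 1)))
    (k : ℕ) : HasDerivAt (sumX a k) ((sumX a k s ^ 2 + sumX2 a k s) / 2 / s) s := by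
  induction k with
  | zero =>
    have h : sumX a 0 = fun _ => 0 := by ext; simp [sumX]
    rw [h]
    simpa [sumX2] using hasDerivAt_const s (0 : ℝ)
  | succ k ih =>
    have h : sumX a (k + 1) = fun t => sumX a k t + piX a (k + 1) t := funext (sumX_succ a k)
    have h2 := ih.add (hasDerivAt_piX ha hs (k + 1))
    rw [h]
    refine h2.congr_deriv ?_
    rw [sumX2_succ, sumX_succ]
    ring

lemma continuousAt_sumX2 {a : ℝ} (ha : 1 < a) {s : ℝ} (hs : s ∈ Set.Ioo 0 (Real.exp (a - 1)))
    (k : ℕ) : ContinuousAt (sumX2 a k) s := by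
  unfold sumX2
  exact tendsto_finsetSum _ fun j _ => (hasDerivAt_piX ha hs j).continuousAt.pow 2

/-- Multiplying by `u` extends a function continuous on `(0, R)` to an integrable function on the
line. -/
lemma integrable_mul_of_tsupport_subset {R : ℝ} {u f : ℝ → ℝ} (hu : Continuous u)
    (hcs : HasCompactSupport u) (hsupp : tsupport u ⊆ Set.Ioo 0 R)
    (hf : ContinuousOn f (Set.Ioo 0 R)) : Integrable (fun r => f r * u r) := by
  have hc : Continuous (fun r => f r * u r) :=
    (hf.mul hu.continuousOn).continuous_of_tsupport_subset isOpen_Ioo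
      ((tsupport_mul_subset_right (f := f) (g := u)).trans hsupp)
  exact hc.integrable_of_hasCompactSupport (hcs.mul_left (f := f))

theorem improved_hardy_radial (a : ℝ) (ha : 1 < a) (R : ℝ)
    (hR : R ∈ Set.Ioo 0 (Real.exp (a - 1))) (k : ℕ) (hk : 1 ≤ k)
    (u : ℝ → ℝ) (hu : ContDiff ℝ (⊤ : ℕ∞) u) (hcs : HasCompactSupport u)
    (hsupp : tsupport u ⊆ Set.Ioo 0 R) :
    ∫ r in Set.Ioo (0 : ℝ) R, r ^ 2 * (deriv u r) ^ 2 ≥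
      (1 / 4) * ∫ r in Set.Ioo (0 : ℝ) R, (1 + sumX2 a k r) * (u r) ^ 2 := by
  have hsub : ∀ r ∈ Set.Ioo 0 R, r ∈ Set.Ioo 0 (Real.exp (a - 1)) :=
    fun r hr => ⟨hr.1, hr.2.trans hR.2⟩
  have huc : Continuous u := hu.continuous
  have hud : Differentiable ℝ u := hu.differentiable (by simp)
  have hdc : Continuous (deriv u) := hu.continuous_deriv (by simp)
  have hS : ContinuousOn (sumX a k) (Set.Ioo 0 R) := fun r hr =>
    (hasDerivAt_sumX ha (hsub r hr) k).continuousAt.continuousWithinAt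
  have hQ : ContinuousOn (sumX2 a k) (Set.Ioo 0 R) := fun r hr =>
    (continuousAt_sumX2 ha (hsub r hr) k).continuousWithinAt
  -- `w` is the total-derivative potential `c r u²`, and `w'` its derivative, grouped as a
  -- multiple of `u`.
  set w : ℝ → ℝ := fun r => (1 + sumX a k r) / 2 * r * u r * u r with hw
  set w' : ℝ → ℝ := fun r =>
    (((1 + sumX a k r) / 2 + (sumX a k r ^ 2 + sumX2 a k r) / 4) * u r
      + (1 + sumX a k r) * r * deriv u r) * u r with hw'
  have hwd : ∀ r, HasDerivAt w (w' r) r := by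
    intro r
    by_cases hr : r ∈ tsupport u
    · have hr' := hsupp hr
      have hr0 : r ≠ 0 := hr'.1.ne'
      have h := (((((hasDerivAt_sumX ha (hsub r hr') k).const_add 1).div_const 2).mul
        (hasDerivAt_id r)).mul (hud r).hasDerivAt).mul (hud r).hasDerivAt
      refine h.congr_deriv ?_
      simp only [hw', id, Pi.mul_apply]
      field_simp
      ring
    · have h0 : u r = 0 := image_eq_zero_of_notMem_tsupport hr
      have hev : w =ᶠ[nhds r] fun _ => 0 := by
        filter_upwards [notMem_tsupport_iff_eventuallyEq.1 hr] with t ht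
        simp [hw, ht]
      have : w' r = 0 := by simp [hw', h0]
      rw [this]
      exact (hasDerivAt_const r (0 : ℝ)).congr_of_eventuallyEq hev
  have hwi : Integrable w := integrable_mul_of_tsupport_subset huc hcs hsupp (by fun_prop)
  have hwi' : Integrable w' := integrable_mul_of_tsupport_subset huc hcs hsupp (by fun_prop)
  have hzero : ∫ r, w' r = 0 := integral_eq_zero_of_hasDerivAt_of_integrable hwd hwi' hwi
  have hzero' : ∫ r in Set.Ioo (0 : ℝ) R, w' r = 0 := by
    rw [setIntegral_eq_integral_of_forall_compl_eq_zero, hzero]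
    intro r hr
    have h0 : u r = 0 := image_eq_zero_of_notMem_tsupport fun h => hr (hsupp h)
    simp [hw', h0]
  have hA : Integrable (fun r => r ^ 2 * (deriv u r) ^ 2) := by
    refine Continuous.integrable_of_hasCompactSupport (by fun_prop) ?_
    have h : HasCompactSupport (fun r => (r ^ 2 * deriv u r) * deriv u r) :=
      hcs.deriv.mul_left (f := fun r => r ^ 2 * deriv u r)
    have he : (fun r => r ^ 2 * (deriv u r) ^ 2) = fun r => (r ^ 2 * deriv u r) * deriv u r := by
      ext r
      ring
    rw [he]
    exact h
  have hB : Integrable (fun r => (1 + sumX2 a k r) * (u r) ^ 2) := by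
    have h := integrable_mul_of_tsupport_subset (f := fun r => (1 + sumX2 a k r) * u r)
      huc hcs hsupp (by fun_prop)
    convert h using 2
    ring
  have hle : ∫ r in Set.Ioo (0 : ℝ) R, ((1 / 4) * ((1 + sumX2 a k r) * (u r) ^ 2) - w' r) ≤
      ∫ r in Set.Ioo (0 : ℝ) R, r ^ 2 * (deriv u r) ^ 2 := by
    refine integral_mono ((hB.const_mul _).sub hwi').integrableOn hA.integrableOn fun r => ?_
    simp only [hw']
    -- The difference of the two sides is exactly this square.
    nlinarith [sq_nonneg (r * deriv u r + (1 + sumX a k r) / 2 * u r)]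
  rw [integral_sub (hB.const_mul _).integrableOn hwi'.integrableOn, hzero', sub_zero,
    integral_const_mul] at hle
  exact hle
end
end

section
/- Let λ₋ < 0 < λ₊ be real numbers and let Φ₋, Φ₊ : ℝ³ → ℂ² be smooth compactly supported spinors satisfying Φ_±(x) + ((σ·L)Φ_±)(x) = λ_± Φ_±(x) for all x ∈ ℝ³. Then ∫_{ℝ³} ⟨ ((σ·∇)Φ₋)(x), ((σ·∇)Φ₊)(x) ⟩_{ℂ²} dx = 0, where ⟨·,·⟩_{ℂ²} is the Hermitian inner product on ℂ². -/
/-!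
Write `D = σ·∇` and `K = 1 + σ·L`. The two operators anticommute, so `K Φ = l Φ` implies
`K (D Φ) = -l (D Φ)` (`IsEig.grad`): differentiate the eigenvalue equation, and use the
commutators of partial derivatives with rotation fields (`dd_rot`) and the equality of mixed
partial derivatives (`dd_comm`).

On the other hand `K` is symmetric. Pointwise, `⟨ψ, K χ⟩ - ⟨K ψ, χ⟩` is a combination of
rotation derivatives `(x_a ∂_b - x_b ∂_a)` of compactly supported functions, and these integrate
to zero since rotation fields are divergence free (`rot_integrable_and_integral`). Hence
eigenspinors of `K` to distinct real eigenvalues are orthogonal (`IsEig.orthogonal`). This is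
applied to `D Φ₋` and `D Φ₊`, whose eigenvalues `-λ₋ > 0 > -λ₊` are distinct.

Spinors are handled through their two complex components.
-/


open MeasureTheory Real Filter Set

noncomputable section

/-! ### Partial derivatives and rotation fields -/

/-- `i`-th partial derivative of a scalar field, the scalar analogue of `pd`. -/
def dd (i : Fin 3) (f : E3 → ℂ) (x : E3) : ℂ :=
  fderiv ℝ f x (EuclideanSpace.single i 1)

/-- The rotation field `x_a ∂_b - x_b ∂_a`, i.e. a component of `L` without the factor `-i`. -/
def rot (a b : Fin 3) (f : E3 → ℂ) (x : E3) : ℂ :=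
  (x a : ℂ) * dd b f x - (x b : ℂ) * dd a f x

lemma contDiff_dd {f : E3 → ℂ} (hf : ContDiff ℝ (⊤ : ℕ∞) f) (i : Fin 3) :
    ContDiff ℝ (⊤ : ℕ∞) (dd i f) :=
  (hf.fderiv_right (m := (⊤ : ℕ∞)) (by norm_cast)).clm_apply contDiff_const

lemma contDiff_coord (a : Fin 3) : ContDiff ℝ (⊤ : ℕ∞) (fun x : E3 => (x a : ℂ)) := by
  exact Complex.ofRealCLM.contDiff.comp (EuclideanSpace.proj (𝕜 := ℝ) a).contDiff

lemma hasCompactSupport_dd {f : E3 → ℂ} (hf : HasCompactSupport f) (i : Fin 3) :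
    HasCompactSupport (dd i f) :=
  hf.fderiv_apply (𝕜 := ℝ) _

lemma differentiable_of_smooth {f : E3 → ℂ} (hf : ContDiff ℝ (⊤ : ℕ∞) f) :
    Differentiable ℝ f :=
  hf.differentiable (by simp)

lemma dd_add {f g : E3 → ℂ} (hf : Differentiable ℝ f) (hg : Differentiable ℝ g) (i : Fin 3)
    (x : E3) : dd i (fun y => f y + g y) x = dd i f x + dd i g x := by
  simp [dd, fderiv_fun_add (hf x) (hg x)]

lemma dd_sub {f g : E3 → ℂ} (hf : Differentiable ℝ f) (hg : Differentiable ℝ g) (i : Fin 3)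
    (x : E3) : dd i (fun y => f y - g y) x = dd i f x - dd i g x := by
  simp [dd, fderiv_fun_sub (hf x) (hg x)]

lemma dd_mul {f g : E3 → ℂ} (hf : Differentiable ℝ f) (hg : Differentiable ℝ g) (i : Fin 3)
    (x : E3) : dd i (fun y => f y * g y) x = f x * dd i g x + g x * dd i f x := by
  simp [dd, fderiv_fun_mul (hf x) (hg x)]

lemma dd_const_mul {f : E3 → ℂ} (hf : Differentiable ℝ f) (c : ℂ) (i : Fin 3) (x : E3) :
    dd i (fun y => c * f y) x = c * dd i f x := by
  simp [dd, fderiv_const_mul (hf x)]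

lemma dd_conj {f : E3 → ℂ} (hf : Differentiable ℝ f) (i : Fin 3) (x : E3) :
    dd i (fun y => starRingEnd ℂ (f y)) x = starRingEnd ℂ (dd i f x) := by
  have h := (Complex.conjCLE.toContinuousLinearMap.hasFDerivAt (x := f x)).comp x
    (hf x).hasFDerivAt
  have h' : HasFDerivAt (fun y => starRingEnd ℂ (f y)) _ x := h
  simp [dd, h'.fderiv]

lemma dd_coord (i a : Fin 3) (x : E3) :
    dd i (fun y : E3 => (y a : ℂ)) x = if a = i then 1 else 0 := by
  have h := (Complex.ofRealCLM.comp (EuclideanSpace.proj (𝕜 := ℝ) a)).hasFDerivAt (x := x)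
  have h' : HasFDerivAt (fun y : E3 => (y a : ℂ)) _ x := h
  rw [dd, h'.fderiv]
  by_cases hh : a = i <;> simp [hh]

lemma dd_comm {f : E3 → ℂ} (hf : ContDiff ℝ (⊤ : ℕ∞) f) (i j : Fin 3) (x : E3) :
    dd i (dd j f) x = dd j (dd i f) x := by
  have hd : DifferentiableAt ℝ (fderiv ℝ f) x :=
    (hf.fderiv_right (m := (⊤ : ℕ∞)) (by norm_cast)).differentiable (by simp) x
  have key : ∀ k l : Fin 3, dd k (dd l f) x =
      fderiv ℝ (fderiv ℝ f) x (EuclideanSpace.single k 1) (EuclideanSpace.single l 1) := by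
    intro k l
    have h : HasFDerivAt (dd l f) _ x :=
      hd.hasFDerivAt.clm_apply (hasFDerivAt_const (EuclideanSpace.single l (1 : ℝ)) x)
    rw [dd, h.fderiv]
    simp
  rw [key, key]
  exact (hf.contDiffAt.isSymmSndFDerivAt (by
    simpa using WithTop.coe_le_coe.2 (le_top : (2 : ℕ∞) ≤ ⊤))).eq _ _

lemma contDiff_rot {f : E3 → ℂ} (hf : ContDiff ℝ (⊤ : ℕ∞) f) (a b : Fin 3) :
    ContDiff ℝ (⊤ : ℕ∞) (rot a b f) :=
  ((contDiff_coord a).mul (contDiff_dd hf b)).sub ((contDiff_coord b).mul (contDiff_dd hf a))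

/-- The commutator of a partial derivative with a rotation field:
`[∂_i, x_a ∂_b - x_b ∂_a] = δ_{ai} ∂_b - δ_{bi} ∂_a`. -/
lemma dd_rot {f : E3 → ℂ} (hf : ContDiff ℝ (⊤ : ℕ∞) f) (i a b : Fin 3) (x : E3) :
    dd i (rot a b f) x = rot a b (dd i f) x +
      ((if a = i then 1 else 0) * dd b f x - (if b = i then 1 else 0) * dd a f x) := by
  have hc := fun a => differentiable_of_smooth (contDiff_coord a)
  have hd := fun a => differentiable_of_smooth (contDiff_dd hf a)
  have h : rot a b f = fun y : E3 => (y a : ℂ) * dd b f y - (y b : ℂ) * dd a f y := rfl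
  rw [h, dd_sub ((hc a).fun_mul (hd b)) ((hc b).fun_mul (hd a)), dd_mul (hc a) (hd b),
    dd_mul (hc b) (hd a), dd_coord, dd_coord, rot, dd_comm hf i b, dd_comm hf i a]
  ring

/-! ### Integration by parts -/

lemma integral_dd_eq_zero {h : E3 → ℂ} (hh : ContDiff ℝ (⊤ : ℕ∞) h) (hs : HasCompactSupport h)
    (i : Fin 3) : ∫ x, dd i h x = 0 := by
  have hi := (contDiff_dd hh i).continuous.integrable_of_hasCompactSupport
    (μ := volume) (hasCompactSupport_dd hs i)
  have hi' := hh.continuous.integrable_of_hasCompactSupport (μ := volume) hs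
  -- Integration by parts against the constant function `1`.
  have := integral_mul_fderiv_eq_neg_fderiv_mul_of_integrable (𝕜 := ℂ) (μ := (volume : Measure E3))
    (f := fun _ => (1 : ℂ)) (g := h) (v := EuclideanSpace.single i 1) (by simp)
    (by simp only [one_mul]; exact hi) (by simpa using hi') (fun _ _ => differentiableAt_const _)
    (fun x _ => differentiable_of_smooth hh x)
  simp only [one_mul, fderiv_fun_const] at this
  simpa [dd] using this

/-- Rotation fields are divergence free, so `∫ (x_a ∂_b - x_b ∂_a) h = 0`
for compactly supported `h`. -/
lemma rot_integrable_and_integral {h : E3 → ℂ} (hh : ContDiff ℝ (⊤ : ℕ∞) h)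
    (hs : HasCompactSupport h) {a b : Fin 3} (hab : a ≠ b) :
    Integrable (rot a b h) ∧ ∫ x, rot a b h x = 0 := by
  -- Divergence form: `x_a ∂_b h - x_b ∂_a h = ∂_b (x_a h) - ∂_a (x_b h)` for `a ≠ b`.
  have e : rot a b h = fun x =>
      dd b (fun y : E3 => (y a : ℂ) * h y) x - dd a (fun y : E3 => (y b : ℂ) * h y) x := by
    funext x
    rw [dd_mul (differentiable_of_smooth (contDiff_coord a)) (differentiable_of_smooth hh),
      dd_mul (differentiable_of_smooth (contDiff_coord b)) (differentiable_of_smooth hh),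
      dd_coord, dd_coord, if_neg hab, if_neg hab.symm, rot]
    ring
  have hc := fun a => (contDiff_coord a).mul hh
  have hk := fun a => hs.mul_left (f := fun y : E3 => (y a : ℂ))
  have hi := fun a b => (contDiff_dd (hc a) b).continuous.integrable_of_hasCompactSupport
    (μ := volume) (hasCompactSupport_dd (hk a) b)
  rw [e]
  refine ⟨(hi a b).sub (hi b a), ?_⟩
  rw [integral_sub (hi a b) (hi b a), integral_dd_eq_zero (hc a) (hk a),
    integral_dd_eq_zero (hc b) (hk b), sub_zero]

/-- Leibniz rule for `conj f * g` under a rotation field, which has real coefficients. -/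
lemma rot_conj_mul {f g : E3 → ℂ} (hf : ContDiff ℝ (⊤ : ℕ∞) f) (hg : ContDiff ℝ (⊤ : ℕ∞) g)
    (a b : Fin 3) (x : E3) :
    rot a b (fun y => starRingEnd ℂ (f y) * g y) x =
      starRingEnd ℂ (f x) * rot a b g x + starRingEnd ℂ (rot a b f x) * g x := by
  have hf' := differentiable_of_smooth hf
  have hg' := differentiable_of_smooth hg
  have hfc : Differentiable ℝ (fun y => starRingEnd ℂ (f y)) :=
    Complex.conjCLE.toContinuousLinearMap.differentiable.comp hf'
  simp only [rot]
  rw [dd_mul hfc hg', dd_mul hfc hg', dd_conj hf', dd_conj hf']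
  simp only [map_sub, map_mul, Complex.conj_ofReal]
  ring

/-! ### The anticommutation of `σ·∇` and `1 + σ·L` -/

/-- The eigenvalue equation `(1 + σ·L) (u, v) = l (u, v)`, written out in components. -/
def IsEig (l : ℝ) (u v : E3 → ℂ) : Prop :=
  ∀ x, u x + (-Complex.I) * (rot 1 2 v x - Complex.I * rot 2 0 v x + rot 0 1 u x) = l * u x ∧
    v x + (-Complex.I) * (rot 1 2 u x + Complex.I * rot 2 0 u x - rot 0 1 v x) = l * v x

/-- First component of `(σ·∇) (u, v)`. -/
def grad1 (u v : E3 → ℂ) (x : E3) : ℂ := dd 2 u x + dd 0 v x - Complex.I * dd 1 v x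

/-- Second component of `(σ·∇) (u, v)`. -/
def grad2 (u v : E3 → ℂ) (x : E3) : ℂ := dd 0 u x + Complex.I * dd 1 u x - dd 2 v x

lemma contDiff_grad1 {u v : E3 → ℂ} (hu : ContDiff ℝ (⊤ : ℕ∞) u) (hv : ContDiff ℝ (⊤ : ℕ∞) v) :
    ContDiff ℝ (⊤ : ℕ∞) (grad1 u v) :=
  ((contDiff_dd hu 2).add (contDiff_dd hv 0)).sub (contDiff_const.mul (contDiff_dd hv 1))

lemma contDiff_grad2 {u v : E3 → ℂ} (hu : ContDiff ℝ (⊤ : ℕ∞) u) (hv : ContDiff ℝ (⊤ : ℕ∞) v) :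
    ContDiff ℝ (⊤ : ℕ∞) (grad2 u v) :=
  ((contDiff_dd hu 0).add (contDiff_const.mul (contDiff_dd hu 1))).sub (contDiff_dd hv 2)

lemma hasCompactSupport_grad1 {u v : E3 → ℂ} (hu : HasCompactSupport u)
    (hv : HasCompactSupport v) : HasCompactSupport (grad1 u v) :=
  ((hasCompactSupport_dd hu 2).add (hasCompactSupport_dd hv 0)).sub
    (hasCompactSupport_dd hv 1).mul_left

lemma hasCompactSupport_grad2 {u v : E3 → ℂ} (hu : HasCompactSupport u)
    (hv : HasCompactSupport v) : HasCompactSupport (grad2 u v) :=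
  ((hasCompactSupport_dd hu 0).add (hasCompactSupport_dd hu 1).mul_left).sub
    (hasCompactSupport_dd hv 2)

lemma rot_grad1 {u v : E3 → ℂ} (hu : ContDiff ℝ (⊤ : ℕ∞) u) (hv : ContDiff ℝ (⊤ : ℕ∞) v)
    (a b : Fin 3) (x : E3) : rot a b (grad1 u v) x =
      rot a b (dd 2 u) x + rot a b (dd 0 v) x - Complex.I * rot a b (dd 1 v) x := by
  have h : ∀ i, dd i (grad1 u v) x =
      dd i (dd 2 u) x + dd i (dd 0 v) x - Complex.I * dd i (dd 1 v) x := by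
    intro i
    have hd := fun a => differentiable_of_smooth (contDiff_dd hu a)
    have hd' := fun a => differentiable_of_smooth (contDiff_dd hv a)
    have e : grad1 u v = fun x => dd 2 u x + dd 0 v x - Complex.I * dd 1 v x := rfl
    rw [e, dd_sub ((hd 2).fun_add (hd' 0)) ((hd' 1).const_mul _), dd_add (hd 2) (hd' 0),
      dd_const_mul (hd' 1)]
  simp only [rot, h]
  ring

lemma rot_grad2 {u v : E3 → ℂ} (hu : ContDiff ℝ (⊤ : ℕ∞) u) (hv : ContDiff ℝ (⊤ : ℕ∞) v)
    (a b : Fin 3) (x : E3) : rot a b (grad2 u v) x =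
      rot a b (dd 0 u) x + Complex.I * rot a b (dd 1 u) x - rot a b (dd 2 v) x := by
  have h : ∀ i, dd i (grad2 u v) x =
      dd i (dd 0 u) x + Complex.I * dd i (dd 1 u) x - dd i (dd 2 v) x := by
    intro i
    have hd := fun a => differentiable_of_smooth (contDiff_dd hu a)
    have hd' := fun a => differentiable_of_smooth (contDiff_dd hv a)
    have e : grad2 u v = fun x => dd 0 u x + Complex.I * dd 1 u x - dd 2 v x := rfl
    rw [e, dd_sub ((hd 0).fun_add ((hd 1).const_mul _)) (hd' 2), dd_add (hd 0) ((hd 1).const_mul _),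
      dd_const_mul (hd 1)]
  simp only [rot, h]
  ring

/-- Since `σ·∇` anticommutes with `1 + σ·L`, it maps the `l`-eigenspace to the
`-l`-eigenspace. -/
lemma IsEig.grad {l : ℝ} {u v : E3 → ℂ} (hu : ContDiff ℝ (⊤ : ℕ∞) u)
    (hv : ContDiff ℝ (⊤ : ℕ∞) v) (h : IsEig l u v) : IsEig (-l) (grad1 u v) (grad2 u v) := by
  have hud := differentiable_of_smooth hu
  have hvd := differentiable_of_smooth hv
  have hru := fun a b => differentiable_of_smooth (contDiff_rot hu a b)
  have hrv := fun a b => differentiable_of_smooth (contDiff_rot hv a b)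
  have h1 : ∀ i x, dd i u x + (-Complex.I) * (dd i (rot 1 2 v) x
      - Complex.I * dd i (rot 2 0 v) x + dd i (rot 0 1 u) x) = l * dd i u x := by
    intro i x
    have e := congrArg (fun f => dd i f x) (funext fun y => (h y).1)
    rwa [dd_add hud ((((hrv 1 2).fun_sub ((hrv 2 0).const_mul _)).fun_add (hru 0 1)).const_mul _),
      dd_const_mul (((hrv 1 2).fun_sub ((hrv 2 0).const_mul _)).fun_add (hru 0 1)),
      dd_add ((hrv 1 2).fun_sub ((hrv 2 0).const_mul _)) (hru 0 1),
      dd_sub (hrv 1 2) ((hrv 2 0).const_mul _), dd_const_mul (hrv 2 0),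
      dd_const_mul hud] at e
  have h2 : ∀ i x, dd i v x + (-Complex.I) * (dd i (rot 1 2 u) x
      + Complex.I * dd i (rot 2 0 u) x - dd i (rot 0 1 v) x) = l * dd i v x := by
    intro i x
    have e := congrArg (fun f => dd i f x) (funext fun y => (h y).2)
    rwa [dd_add hvd ((((hru 1 2).fun_add ((hru 2 0).const_mul _)).fun_sub (hrv 0 1)).const_mul _),
      dd_const_mul (((hru 1 2).fun_add ((hru 2 0).const_mul _)).fun_sub (hrv 0 1)),
      dd_sub ((hru 1 2).fun_add ((hru 2 0).const_mul _)) (hrv 0 1),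
      dd_add (hru 1 2) ((hru 2 0).const_mul _), dd_const_mul (hru 2 0),
      dd_const_mul hvd] at e
  intro x
  have a0 := h1 0 x
  have a1 := h1 1 x
  have a2 := h1 2 x
  have b0 := h2 0 x
  have b1 := h2 1 x
  have b2 := h2 2 x
  simp only [dd_rot hu, dd_rot hv, Fin.isValue, Fin.reduceEq, if_true, if_false]
    at a0 a1 a2 b0 b1 b2
  simp only [rot_grad1 hu hv, rot_grad2 hu hv]
  simp only [grad1, grad2, rot] at *
  simp only [dd_comm hu 2 0, dd_comm hu 1 0, dd_comm hu 2 1,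
    dd_comm hv 2 0, dd_comm hv 1 0, dd_comm hv 2 1] at *
  push_cast
  have hI : Complex.I ^ 2 = -1 := Complex.I_sq
  constructor
  · linear_combination (exp := 1) -a2 - b0 + Complex.I * b1 + (2 * dd 2 u x + 2 * dd 0 v x
      + 2 * Complex.I * x 2 * dd 0 (dd 1 u) x - 2 * Complex.I * x 0 * dd 1 (dd 2 u) x) * hI
  · linear_combination (exp := 1) -a0 - Complex.I * a1 + b2 + (2 * dd 0 u x - 2 * dd 2 v x
      + 2 * Complex.I * x 2 * dd 0 (dd 1 v) x - 2 * Complex.I * x 0 * dd 1 (dd 2 v) x) * hI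

/-! ### Passage to components -/

lemma pd_eq {Φ : E3 → ℂ × ℂ} (hΦ : ContDiff ℝ (⊤ : ℕ∞) Φ) (i : Fin 3) (x : E3) :
    pd i Φ x = (dd i (fun y => (Φ y).1) x, dd i (fun y => (Φ y).2) x) := by
  have hd := hΦ.differentiable (by simp) x
  simp [pd, dd, fderiv.fst hd, fderiv.snd hd]

lemma sigmaGrad_eq {Φ : E3 → ℂ × ℂ} (hΦ : ContDiff ℝ (⊤ : ℕ∞) Φ) (x : E3) :
    sigmaGrad Φ x = (grad1 (fun y => (Φ y).1) (fun y => (Φ y).2) x,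
      grad2 (fun y => (Φ y).1) (fun y => (Φ y).2) x) := by
  simp [sigmaGrad, grad1, grad2, pd_eq hΦ]

lemma isEig_of_sigmaL {l : ℝ} {Φ : E3 → ℂ × ℂ} (hΦ : ContDiff ℝ (⊤ : ℕ∞) Φ)
    (h : ∀ x, Φ x + sigmaL Φ x = l • Φ x) :
    IsEig l (fun x => (Φ x).1) (fun x => (Φ x).2) := by
  intro x
  have h1 := congrArg Prod.fst (h x)
  have h2 := congrArg Prod.snd (h x)
  simp only [sigmaL, pauli1, pauli2, pauli3, pd_eq hΦ, Prod.fst_add, Prod.snd_add, Prod.smul_fst,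
    Prod.smul_snd, Prod.fst_sub, Prod.snd_sub, smul_eq_mul, Complex.real_smul] at h1 h2
  simp only [rot]
  constructor
  · linear_combination (exp := 1) h1
  · linear_combination (exp := 1) h2

/-! ### Orthogonality of eigenspinors -/

/-- `1 + σ·L` is symmetric on compactly supported spinors, so eigenspinors to distinct real
eigenvalues are orthogonal. Compact support of one of the two is enough. -/
lemma IsEig.orthogonal {l m : ℝ} (hlm : l ≠ m) {u v w z : E3 → ℂ}
    (hu : ContDiff ℝ (⊤ : ℕ∞) u) (hv : ContDiff ℝ (⊤ : ℕ∞) v)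
    (hw : ContDiff ℝ (⊤ : ℕ∞) w) (hz : ContDiff ℝ (⊤ : ℕ∞) z)
    (hws : HasCompactSupport w) (hzs : HasCompactSupport z)
    (h₁ : IsEig l u v) (h₂ : IsEig m w z) :
    ∫ x, (starRingEnd ℂ (u x) * w x + starRingEnd ℂ (v x) * z x) = 0 := by
  have hc : ∀ {f g : E3 → ℂ}, ContDiff ℝ (⊤ : ℕ∞) f → ContDiff ℝ (⊤ : ℕ∞) g →
      ContDiff ℝ (⊤ : ℕ∞) (fun y => starRingEnd ℂ (f y) * g y) := fun hf hg =>
    (Complex.conjCLE.toContinuousLinearMap.contDiff.comp hf).mul hg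
  have key : ∀ {f g : E3 → ℂ}, ContDiff ℝ (⊤ : ℕ∞) f → ContDiff ℝ (⊤ : ℕ∞) g →
      HasCompactSupport g → ∀ {a b : Fin 3}, a ≠ b →
      Integrable (rot a b (fun y => starRingEnd ℂ (f y) * g y)) ∧
        ∫ x, rot a b (fun y => starRingEnd ℂ (f y) * g y) x = 0 := fun hf hg hgs _ _ hab =>
    rot_integrable_and_integral (hc hf hg) hgs.mul_left hab
  obtain ⟨i1, e1⟩ := key hu hz hzs (a := 1) (b := 2) (by decide)
  obtain ⟨i2, e2⟩ := key hv hw hws (a := 1) (b := 2) (by decide)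
  obtain ⟨i3, e3⟩ := key hu hz hzs (a := 2) (b := 0) (by decide)
  obtain ⟨i4, e4⟩ := key hv hw hws (a := 2) (b := 0) (by decide)
  obtain ⟨i5, e5⟩ := key hu hw hws (a := 0) (b := 1) (by decide)
  obtain ⟨i6, e6⟩ := key hv hz hzs (a := 0) (b := 1) (by decide)
  -- `⟨ψ, Kχ⟩ - ⟨Kψ, χ⟩ = -i ∑ₖ Rₖ ⟨ψ, σₖ χ⟩` for `K = 1 + σ·L` and the rotation fields `Rₖ`.
  have hpt : ∀ x, ((m : ℂ) - l) * (starRingEnd ℂ (u x) * w x + starRingEnd ℂ (v x) * z x) =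
      (-Complex.I) * (rot 1 2 (fun y => starRingEnd ℂ (u y) * z y) x
        + rot 1 2 (fun y => starRingEnd ℂ (v y) * w y) x
        + (-Complex.I) * rot 2 0 (fun y => starRingEnd ℂ (u y) * z y) x
        + Complex.I * rot 2 0 (fun y => starRingEnd ℂ (v y) * w y) x
        + rot 0 1 (fun y => starRingEnd ℂ (u y) * w y) x
        - rot 0 1 (fun y => starRingEnd ℂ (v y) * z y) x) := by
    intro x
    obtain ⟨a1, a2⟩ := h₁ x
    obtain ⟨b1, b2⟩ := h₂ x
    replace a1 := congrArg (starRingEnd ℂ) a1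
    replace a2 := congrArg (starRingEnd ℂ) a2
    simp only [map_add, map_sub, map_mul, map_neg, Complex.conj_I, Complex.conj_ofReal] at a1 a2
    simp only [rot_conj_mul hu hz, rot_conj_mul hv hw, rot_conj_mul hu hw, rot_conj_mul hv hz]
    linear_combination (exp := 1) (-starRingEnd ℂ (u x)) * b1 - starRingEnd ℂ (v x) * b2
      + w x * a1 + z x * a2
  have hint : ((m : ℂ) - l) *
      ∫ x, (starRingEnd ℂ (u x) * w x + starRingEnd ℂ (v x) * z x) = 0 := by
    have j3 := i1.fun_add i2
    have j4 := j3.fun_add (i3.const_mul (-Complex.I))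
    have j5 := j4.fun_add (i4.const_mul Complex.I)
    have j6 := j5.fun_add i5
    rw [← integral_const_mul, integral_congr_ae (Eventually.of_forall hpt), integral_const_mul,
      integral_sub j6 i6, integral_add j5 i5, integral_add j4 (i4.const_mul _),
      integral_add j3 (i3.const_mul _), integral_add i1 i2, integral_const_mul,
      integral_const_mul, e1, e2, e3, e4, e5, e6]
    simp
  refine (mul_eq_zero.mp hint).resolve_left (sub_ne_zero.mpr ?_)
  exact_mod_cast hlm.symm

theorem orthogonality_of_gradients (lm lp : ℝ) (hlm : lm < 0) (hlp : 0 < lp)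
    (Φm Φp : E3 → ℂ × ℂ)
    (hm : ContDiff ℝ (⊤ : ℕ∞) Φm) (hp : ContDiff ℝ (⊤ : ℕ∞) Φp)
    (hms : HasCompactSupport Φm) (hps : HasCompactSupport Φp)
    (heigm : ∀ x, Φm x + sigmaL Φm x = lm • Φm x)
    (heigp : ∀ x, Φp x + sigmaL Φp x = lp • Φp x) :
    ∫ x : E3,
        (starRingEnd ℂ (sigmaGrad Φm x).1 * (sigmaGrad Φp x).1 +
          starRingEnd ℂ (sigmaGrad Φm x).2 * (sigmaGrad Φp x).2) = 0 := by
  have hm1 : ContDiff ℝ (⊤ : ℕ∞) (fun x => (Φm x).1) := contDiff_fst.comp hm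
  have hm2 : ContDiff ℝ (⊤ : ℕ∞) (fun x => (Φm x).2) := contDiff_snd.comp hm
  have hp1 : ContDiff ℝ (⊤ : ℕ∞) (fun x => (Φp x).1) := contDiff_fst.comp hp
  have hp2 : ContDiff ℝ (⊤ : ℕ∞) (fun x => (Φp x).2) := contDiff_snd.comp hp
  have s1 : HasCompactSupport (fun x => (Φp x).1) := hps.comp_left (g := Prod.fst) rfl
  have s2 : HasCompactSupport (fun x => (Φp x).2) := hps.comp_left (g := Prod.snd) rfl
  simp only [sigmaGrad_eq hm, sigmaGrad_eq hp]
  exact IsEig.orthogonal (by intro h; linarith : -lm ≠ -lp) (contDiff_grad1 hm1 hm2)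
    (contDiff_grad2 hm1 hm2) (contDiff_grad1 hp1 hp2) (contDiff_grad2 hp1 hp2)
    (hasCompactSupport_grad1 s1 s2) (hasCompactSupport_grad2 s1 s2)
    ((isEig_of_sigmaL hm heigm).grad hm1 hm2) ((isEig_of_sigmaL hp heigp).grad hp1 hp2)
end
end
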